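/- Uniqueness of the spin projection up to scalar: let F : V ⊗ Δ → Δ be a ℂ-linear map such that for all v, w ∈ W, λ, μ ∈ W*, x ∈ V and a ∈ Δ the following five intertwining relations hold: (i) F(A_{v,w}(x) ⊗ a) + F(x ⊗ X_v X_w a) = X_v X_w F(x ⊗ a); (ii) F(C_v(x) ⊗ a) + (1/√2) F(x ⊗ X_v D a) = (1/√2) X_v D F(x ⊗ a); (iii) F(H_{v,λ}(x) ⊗ a) + F(x ⊗ (X_v D_λ − (1/2)λ(v)) a) = (X_v D_λ − (1/2)λ(v)) F(x ⊗ a); (iv) F(B_λ(x) ⊗ a) + (1/√2) F(x ⊗ D D_λ a) = (1/√2) D D_λ F(x ⊗ a); (v) F(E_{λ,μ}(x) ⊗ a) + F(x ⊗ D_λ D_μ a) = D_λ D_μ F(x ⊗ a). Then there is a scalar c ∈ ℂ with F = c · π. -/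

import Mathlib

noncomputable section

open TensorProduct

/-- `W = ℂ^m`. -/
abbrev SpinW (m : ℕ) : Type := Fin m → ℂ

/-- `Δ = ⋀ W`, the exterior algebra of `W`. -/
abbrev SpinDelta (m : ℕ) : Type := ExteriorAlgebra ℂ (SpinW m)

/-- `V = W ⊕ W* ⊕ ℂe`. -/
abbrev SpinV (m : ℕ) : Type := SpinW m × Module.Dual ℂ (SpinW m) × ℂ

/-- The standard basis vector `w_i` of `W`. -/
def wB (m : ℕ) (i : Fin m) : SpinW m := Pi.single i 1

/-- The dual basis vector `w_i*` of `W*`. -/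
def wD (m : ℕ) (i : Fin m) : Module.Dual ℂ (SpinW m) := LinearMap.proj i

/-- `w_i` regarded as an element of `V`. -/
def wV (m : ℕ) (i : Fin m) : SpinV m := (wB m i, 0, 0)

/-- `w_i*` regarded as an element of `V`. -/
def wsV (m : ℕ) (i : Fin m) : SpinV m := (0, wD m i, 0)

/-- `e` regarded as an element of `V`. -/
def eV (m : ℕ) : SpinV m := (0, 0, 1)

/-- `X_v : Δ → Δ`, left exterior multiplication by `v ∈ W`. -/
def Xop (m : ℕ) (v : SpinW m) : SpinDelta m →ₗ[ℂ] SpinDelta m :=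
  LinearMap.mulLeft ℂ (ExteriorAlgebra.ι ℂ v)

/-- `D_λ : Δ → Δ`, the interior product with `λ ∈ W*`;
it satisfies `D_λ(v₁ ∧ ⋯ ∧ v_k) = Σ (−1)^{i−1} λ(v_i) v₁ ∧ ⋯ ∧ v̂_i ∧ ⋯ ∧ v_k`. -/
def Dop (m : ℕ) (lam : Module.Dual ℂ (SpinW m)) : SpinDelta m →ₗ[ℂ] SpinDelta m :=
  CliffordAlgebra.contractLeft (Q := (0 : QuadraticForm ℂ (SpinW m))) lam

/-- The grading operator `D : Δ → Δ` acting by `(−1)^k` on `⋀^k W`. -/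
def Gop (m : ℕ) : SpinDelta m →ₗ[ℂ] SpinDelta m :=
  (CliffordAlgebra.involute (Q := (0 : QuadraticForm ℂ (SpinW m)))).toLinearMap

/-- Projection `V → W`. -/
def pW (m : ℕ) : SpinV m →ₗ[ℂ] SpinW m := LinearMap.fst ℂ _ _

/-- Projection `V → W*`. -/
def pD (m : ℕ) : SpinV m →ₗ[ℂ] Module.Dual ℂ (SpinW m) :=
  (LinearMap.fst ℂ _ ℂ).comp (LinearMap.snd ℂ (SpinW m) _)

/-- Projection `V → ℂ` (the `e`-coordinate). -/
def pC (m : ℕ) : SpinV m →ₗ[ℂ] ℂ :=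
  (LinearMap.snd ℂ _ ℂ).comp (LinearMap.snd ℂ (SpinW m) _)

/-- Inclusion `W → V`. -/
def iW (m : ℕ) : SpinW m →ₗ[ℂ] SpinV m :=
  LinearMap.inl ℂ (SpinW m) (Module.Dual ℂ (SpinW m) × ℂ)

/-- Inclusion `W* → V`. -/
def iD (m : ℕ) : Module.Dual ℂ (SpinW m) →ₗ[ℂ] SpinV m :=
  (LinearMap.inr ℂ (SpinW m) _).comp (LinearMap.inl ℂ (Module.Dual ℂ (SpinW m)) ℂ)

/-- Inclusion `ℂe → V`. -/
def iC (m : ℕ) : ℂ →ₗ[ℂ] SpinV m :=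
  (LinearMap.inr ℂ (SpinW m) _).comp (LinearMap.inr ℂ (Module.Dual ℂ (SpinW m)) ℂ)

/-- The symmetric bilinear form `ω` on `V`:
`ω((u,η,c),(u',η',c')) = η'(u) + η(u') + c·c'`; so `ω(w_i, w_j*) = δ_{ij}`,
`ω(e,e) = 1`, `W` and `W*` are isotropic and `e` is orthogonal to both. -/
def omegaB (m : ℕ) : SpinV m →ₗ[ℂ] SpinV m →ₗ[ℂ] ℂ :=
  ((((LinearMap.llcomp ℂ (SpinV m) (SpinW m) ℂ).flip (pW m)).comp (pD m)).flip
  + ((LinearMap.llcomp ℂ (SpinV m) (SpinW m) ℂ).flip (pW m)).comp (pD m))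
  + (pC m).smulRight (pC m)

/-- The spin projection `π : V ⊗ Δ → Δ` as a bilinear map:
`(v,λ,c) ⊗ a ↦ √2 X_v(a) + √2 D_λ(a) + c D(a)`. -/
def piB (m : ℕ) : SpinV m →ₗ[ℂ] SpinDelta m →ₗ[ℂ] SpinDelta m :=
  (Real.sqrt 2 : ℂ) • (((LinearMap.mul ℂ (SpinDelta m)).comp ((ExteriorAlgebra.ι ℂ).comp (pW m)))
      + (CliffordAlgebra.contractLeft (Q := (0 : QuadraticForm ℂ (SpinW m)))).comp (pD m))
  + (pC m).smulRight (Gop m)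

/-- The spin projection `π : V ⊗ Δ → Δ`. -/
def piMap (m : ℕ) : SpinV m ⊗[ℂ] SpinDelta m →ₗ[ℂ] SpinDelta m :=
  TensorProduct.lift (piB m)

/-- The spin injection `ι : Δ → V ⊗ Δ`,
`a ↦ √2 Σᵢ (wᵢ ⊗ D_{wᵢ*}(a) + wᵢ* ⊗ X_{wᵢ}(a)) + e ⊗ D(a)`. -/
def iotaMap (m : ℕ) : SpinDelta m →ₗ[ℂ] SpinV m ⊗[ℂ] SpinDelta m :=
  (Real.sqrt 2 : ℂ) • (∑ i : Fin m,
      ((TensorProduct.mk ℂ (SpinV m) (SpinDelta m) (wV m i)).comp (Dop m (wD m i))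
        + (TensorProduct.mk ℂ (SpinV m) (SpinDelta m) (wsV m i)).comp (Xop m (wB m i))))
  + (TensorProduct.mk ℂ (SpinV m) (SpinDelta m) (eV m)).comp (Gop m)

/-- The invariant element `θ = Σᵢ (wᵢ ⊗ wᵢ* + wᵢ* ⊗ wᵢ) + e ⊗ e ∈ V ⊗ V`. -/
def theta (m : ℕ) : SpinV m ⊗[ℂ] SpinV m :=
  (∑ i : Fin m, (wV m i ⊗ₜ wsV m i + wsV m i ⊗ₜ wV m i)) + eV m ⊗ₜ eV m

/-- Evaluation of a dual vector at `w ∈ W`. -/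
def evalW (m : ℕ) (w : SpinW m) : Module.Dual ℂ (SpinW m) →ₗ[ℂ] ℂ :=
  Module.Dual.eval ℂ (SpinW m) w

/-- `A_{v,w} : V → V`, with `A(u) = 0`, `A(η) = η(w)v − η(v)w`, `A(e) = 0`. -/
def Amap (m : ℕ) (v w : SpinW m) : SpinV m →ₗ[ℂ] SpinV m :=
  (iW m) ∘ₗ (((evalW m w).smulRight v - (evalW m v).smulRight w) ∘ₗ pD m)

/-- `B_λ : V → V`, with `B(u) = λ(u)e`, `B(η) = 0`, `B(e) = −λ`. -/
def Bmap (m : ℕ) (lam : Module.Dual ℂ (SpinW m)) : SpinV m →ₗ[ℂ] SpinV m :=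
  (iC m) ∘ₗ (lam ∘ₗ pW m) - (iD m) ∘ₗ ((pC m).smulRight lam)

/-- `C_v : V → V`, with `C(u) = 0`, `C(η) = −η(v)e`, `C(e) = v`. -/
def Cmap (m : ℕ) (v : SpinW m) : SpinV m →ₗ[ℂ] SpinV m :=
  (iW m) ∘ₗ ((pC m).smulRight v) - (iC m) ∘ₗ ((evalW m v) ∘ₗ pD m)

/-- `H_{v,λ} : V → V`, with `H(u) = λ(u)v`, `H(η) = −η(v)λ`, `H(e) = 0`. -/
def Hmap (m : ℕ) (v : SpinW m) (lam : Module.Dual ℂ (SpinW m)) : SpinV m →ₗ[ℂ] SpinV m :=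
  (iW m) ∘ₗ ((lam ∘ₗ pW m).smulRight v) - (iD m) ∘ₗ (((evalW m v) ∘ₗ pD m).smulRight lam)

/-- `E_{λ,μ} : V → V`, with `E(u) = μ(u)λ − λ(u)μ`, `E(η) = 0`, `E(e) = 0`. -/
def Emap (m : ℕ) (lam mu : Module.Dual ℂ (SpinW m)) : SpinV m →ₗ[ℂ] SpinV m :=
  (iD m) ∘ₗ ((mu ∘ₗ pW m).smulRight lam - (lam ∘ₗ pW m).smulRight mu)

/-- The contraction `ω ⊗ id_Δ : V ⊗ (V ⊗ Δ) → Δ`, `x ⊗ y ⊗ b ↦ ω(x,y) b`. -/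
def contrMap (m : ℕ) : SpinV m ⊗[ℂ] (SpinV m ⊗[ℂ] SpinDelta m) →ₗ[ℂ] SpinDelta m :=
  (TensorProduct.lid ℂ (SpinDelta m)).toLinearMap
    ∘ₗ (TensorProduct.map (TensorProduct.lift (omegaB m)) LinearMap.id)
    ∘ₗ (TensorProduct.assoc ℂ (SpinV m) (SpinV m) (SpinDelta m)).symm.toLinearMap

/-- The swap `τ ⊗ id_Δ : V ⊗ (V ⊗ Δ) → V ⊗ (V ⊗ Δ)`, `x ⊗ y ⊗ b ↦ y ⊗ x ⊗ b`. -/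
def swapMap (m : ℕ) :
    SpinV m ⊗[ℂ] (SpinV m ⊗[ℂ] SpinDelta m) →ₗ[ℂ] SpinV m ⊗[ℂ] (SpinV m ⊗[ℂ] SpinDelta m) :=
  (TensorProduct.assoc ℂ (SpinV m) (SpinV m) (SpinDelta m)).toLinearMap
    ∘ₗ (LinearMap.rTensor (SpinDelta m) (TensorProduct.comm ℂ (SpinV m) (SpinV m)).toLinearMap)
    ∘ₗ (TensorProduct.assoc ℂ (SpinV m) (SpinV m) (SpinDelta m)).symm.toLinearMap

/-!
The generators `A`, `H` and `E` annihilate `e`, so the relations (i), (iii) and (v) at `e` say that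
`S = F(e ⊗ ·)` commutes with the even part of the Clifford algebra of `W ⊕ W*`. Every contraction
kills `S 1`, and, when `λ(w) = 1`, also `D_λ (S w)`. An element of `⋀ W` killed by all contractions
is a scalar: adding a rank-one map `μ ⊗ w` to `f` changes `⋀ f` by `X_w ∘ ⋀ f ∘ D_μ`, so such an
element has the same image under `⋀ id` as under `⋀ 0`. Hence `S` is a scalar on `⋀⁰ W` and on
`W`, and multiplying by pairs of vectors gives `S = p + q D`. Relations (ii) and (iv) at `e`
determine `F` on `W ⊗ Δ` and `W* ⊗ Δ` as `q π`, and relation (ii) at `w*` forces `p = 0`.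
-/

section ExteriorContraction

open ExteriorAlgebra

local infixl:70 "⌋" => CliffordAlgebra.contractLeft

section CommRing

variable {R M N : Type*} [CommRing R] [AddCommGroup M] [Module R M] [AddCommGroup N] [Module R N]

theorem contractLeft_involute {Q : QuadraticForm R M} (d : Module.Dual R M)
    (a : CliffordAlgebra Q) :
    d ⌋ CliffordAlgebra.involute a = -CliffordAlgebra.involute (d ⌋ a) := by
  induction a using CliffordAlgebra.left_induction with
  | algebraMap r => simp only [AlgHom.commutes, CliffordAlgebra.contractLeft_algebraMap, map_zero,
      neg_zero]
  | add a b ha hb => simp only [map_add, ha, hb, neg_add]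
  | ι_mul a v ha =>
    simp only [map_mul, CliffordAlgebra.involute_ι, neg_mul, map_neg,
      CliffordAlgebra.contractLeft_ι_mul, ha, mul_neg, map_sub, map_smul]

theorem exteriorAlgebraMap_add_smulRight_apply (f : M →ₗ[R] N) (d : Module.Dual R M) (n : N)
    (a : ExteriorAlgebra R M) :
    ExteriorAlgebra.map (f + d.smulRight n) a =
      ExteriorAlgebra.map f a + ι R n * ExteriorAlgebra.map f (d ⌋ a) := by
  induction a using CliffordAlgebra.left_induction with
  | algebraMap r => simp only [AlgHom.commutes, CliffordAlgebra.contractLeft_algebraMap, map_zero,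
      mul_zero, add_zero]
  | add a b ha hb => simp only [map_add, ha, hb, mul_add, add_add_add_comm]
  | ι_mul a v ha =>
    set b := ExteriorAlgebra.map f (d ⌋ a) with hb
    have hsq : ι R n * (ι R n * b) = 0 := by
      rw [← mul_assoc, ι_sq_zero, zero_mul]
    have hswap : ι R (f v) * (ι R n * b) = -(ι R n * (ι R (f v) * b)) := by
      rw [← mul_assoc, eq_neg_of_add_eq_zero_left (ι_add_mul_swap (f v) n), neg_mul, mul_assoc]
    simp only [CliffordAlgebra.contractLeft_ι_mul, ha, map_apply_ι, LinearMap.add_apply,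
      LinearMap.smulRight_apply, map_add, map_sub, map_smul, map_mul, add_mul, mul_add, mul_sub,
      smul_mul_assoc, mul_smul_comm, ← hb, hsq, hswap]
    module

theorem exteriorAlgebraMap_add_dualTensorHom_apply {a : ExteriorAlgebra R M}
    (ha : ∀ d : Module.Dual R M, d ⌋ a = 0) (f : M →ₗ[R] N) (t : Module.Dual R M ⊗[R] N) :
    ExteriorAlgebra.map (f + dualTensorHom R M N t) a = ExteriorAlgebra.map f a := by
  induction t generalizing f with
  | zero => rw [map_zero, add_zero]
  | tmul d n =>
    calc ExteriorAlgebra.map (f + d.smulRight n) a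
      _ = ExteriorAlgebra.map f a + ι R n * ExteriorAlgebra.map f (d ⌋ a) :=
        exteriorAlgebraMap_add_smulRight_apply f d n a
      _ = ExteriorAlgebra.map f a := by rw [ha, map_zero, mul_zero, add_zero]
  | add s t hs ht => rw [map_add, ← add_assoc, ht, hs]

theorem exteriorAlgebraMap_zero_apply (a : ExteriorAlgebra R M) :
    ExteriorAlgebra.map (0 : M →ₗ[R] N) a = algebraMap R _ (algebraMapInv a) := by
  have : ExteriorAlgebra.map (0 : M →ₗ[R] N) = (Algebra.ofId R _).comp algebraMapInv :=
    hom_ext (by ext v; simp [algebraMapInv])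
  rw [this]
  rfl

theorem eq_algebraMap_of_contractLeft_eq_zero [Module.Projective R M] [Module.Finite R M]
    {a : ExteriorAlgebra R M} (ha : ∀ d : Module.Dual R M, d ⌋ a = 0) :
    a = algebraMap R _ (algebraMapInv a) := by
  obtain ⟨t, ht⟩ := (dualTensorHomEquiv R M M).surjective LinearMap.id
  replace ht : 0 + dualTensorHom R M M t = LinearMap.id := by
    rw [zero_add]; exact ht
  calc a = ExteriorAlgebra.map (0 + dualTensorHom R M M t) a := by
        rw [ht, ExteriorAlgebra.map_id, AlgHom.id_apply]
    _ = ExteriorAlgebra.map 0 a := exteriorAlgebraMap_add_dualTensorHom_apply ha 0 t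
    _ = algebraMap R _ (algebraMapInv a) := exteriorAlgebraMap_zero_apply a

theorem linearMap_ext_of_map_ι_mul_ι_mul {S T : Module.End R (ExteriorAlgebra R M)}
    (hS : ∀ v w a, S (ι R v * (ι R w * a)) = ι R v * (ι R w * S a))
    (hT : ∀ v w a, T (ι R v * (ι R w * a)) = ι R v * (ι R w * T a))
    (one : S 1 = T 1) (ι_eq : ∀ v, S (ι R v) = T (ι R v)) : S = T := by
  suffices h : ∀ a, S a = T a ∧ ∀ u, S (ι R u * a) = T (ι R u * a) from
    LinearMap.ext fun a => (h a).1
  intro a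
  induction a using CliffordAlgebra.left_induction with
  | algebraMap r =>
    refine ⟨?_, fun u => ?_⟩
    · rw [Algebra.algebraMap_eq_smul_one, map_smul, map_smul, one]
    · rw [Algebra.algebraMap_eq_smul_one, mul_smul_comm, mul_one, map_smul, map_smul, ι_eq]
  | add a b ha hb =>
    refine ⟨?_, fun u => ?_⟩
    · rw [map_add, map_add, ha.1, hb.1]
    · rw [mul_add, map_add, map_add, ha.2, hb.2]
  | ι_mul a v ha => exact ⟨ha.2 v, fun u => by rw [hS, hT, ha.1]⟩

end CommRing

/-- `S` commutes with the even part of the Clifford algebra of `W ⊕ W*` acting on `⋀ W`, encoded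
through its generators: the products of two exterior multiplications or interior products. -/
structure CommutesWithEvenClifford {K W : Type*} [CommRing K] [AddCommGroup W] [Module K W]
    (S : Module.End K (ExteriorAlgebra K W)) : Prop where
  map_ι_mul_ι_mul : ∀ v w a, S (ι K v * (ι K w * a)) = ι K v * (ι K w * S a)
  map_ι_mul_contractLeft : ∀ v (d : Module.Dual K W) a, S (ι K v * (d ⌋ a)) = ι K v * (d ⌋ S a)
  map_contractLeft_contractLeft : ∀ (d d' : Module.Dual K W) a, S (d ⌋ (d' ⌋ a)) = d ⌋ (d' ⌋ S a)

namespace CommutesWithEvenClifford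

variable {K W : Type*} [Field K] [AddCommGroup W] [Module K W]
  {S : Module.End K (ExteriorAlgebra K W)}

theorem contractLeft_map_one (hS : CommutesWithEvenClifford S) (d : Module.Dual K W) :
    d ⌋ S 1 = 0 := by
  by_cases hd : d = 0
  · rw [hd, map_zero, LinearMap.zero_apply]
  obtain ⟨v, hv⟩ := LinearMap.surjective hd 1
  have hvd : ι K v * (d ⌋ S 1) = 0 := by
    rw [← hS.map_ι_mul_contractLeft, CliffordAlgebra.contractLeft_one, mul_zero, map_zero]
  calc d ⌋ S 1 = d ⌋ (ι K v * (d ⌋ S 1)) := by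
        rw [CliffordAlgebra.contractLeft_ι_mul, hv, one_smul,
          CliffordAlgebra.contractLeft_contractLeft, mul_zero, sub_zero]
    _ = 0 := by rw [hvd, map_zero]

theorem exists_map_one [FiniteDimensional K W] (hS : CommutesWithEvenClifford S) :
    ∃ α : K, S 1 = α • 1 :=
  ⟨_, (eq_algebraMap_of_contractLeft_eq_zero hS.contractLeft_map_one).trans
    (Algebra.algebraMap_eq_smul_one _)⟩

theorem exists_map_ι [FiniteDimensional K W] (hS : CommutesWithEvenClifford S) :
    ∃ β : K, ∀ v, S (ι K v) = β • ι K v := by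
  rcases subsingleton_or_nontrivial W with _ | _
  · exact ⟨0, fun v => by rw [Subsingleton.elim v 0, map_zero, map_zero, smul_zero]⟩
  obtain ⟨w, hw⟩ := exists_ne (0 : W)
  obtain ⟨d, hdw⟩ := Module.Projective.exists_dual_eq_one K hw
  have hdι : d ⌋ ι K w = 1 := by rw [CliffordAlgebra.contractLeft_ι, hdw, map_one]
  have hscalar : ∀ d' : Module.Dual K W, d' ⌋ (d ⌋ S (ι K w)) = 0 := fun d' => by
    rw [← hS.map_contractLeft_contractLeft, hdι, CliffordAlgebra.contractLeft_one, map_zero]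
  refine ⟨algebraMapInv (d ⌋ S (ι K w)), fun v => ?_⟩
  calc S (ι K v) = S (ι K v * (d ⌋ ι K w)) := by rw [hdι, mul_one]
    _ = ι K v * (d ⌋ S (ι K w)) := hS.map_ι_mul_contractLeft v d _
    _ = algebraMapInv (d ⌋ S (ι K w)) • ι K v := by
        conv_lhs => rw [eq_algebraMap_of_contractLeft_eq_zero hscalar]
        rw [← Algebra.commutes, ← Algebra.smul_def]

theorem exists_eq_smul_id_add_smul_involute [NeZero (2 : K)] [FiniteDimensional K W]
    (hS : CommutesWithEvenClifford S) :
    ∃ p q : K, S = p • LinearMap.id + q • CliffordAlgebra.involute.toLinearMap := by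
  obtain ⟨α, hα⟩ := hS.exists_map_one
  obtain ⟨β, hβ⟩ := hS.exists_map_ι
  refine ⟨(α + β) / 2, (α - β) / 2, linearMap_ext_of_map_ι_mul_ι_mul hS.map_ι_mul_ι_mul ?_ ?_ ?_⟩
  · intro v w a
    simp only [LinearMap.add_apply, LinearMap.smul_apply, LinearMap.id_apply,
      AlgHom.toLinearMap_apply, map_mul, CliffordAlgebra.involute_ι, mul_add,
      mul_smul_comm, mul_neg, neg_mul, neg_neg]
  · have hsum : α = (α + β) / 2 + (α - β) / 2 := by field
    simp only [LinearMap.add_apply, LinearMap.smul_apply, LinearMap.id_apply,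
      AlgHom.toLinearMap_apply, map_one, ← add_smul, ← hsum, hα]
  · intro v
    have hdiff : β = (α + β) / 2 - (α - β) / 2 := by field
    simp only [LinearMap.add_apply, LinearMap.smul_apply, LinearMap.id_apply,
      AlgHom.toLinearMap_apply, CliffordAlgebra.involute_ι, smul_neg, ← sub_eq_add_neg,
      ← sub_smul, ← hdiff, hβ]

end CommutesWithEvenClifford

end ExteriorContraction

section SpinProjection

variable {m : ℕ}

theorem Gop_Gop (a : SpinDelta m) : Gop m (Gop m a) = a :=
  CliffordAlgebra.involute_involute a

theorem Gop_Xop (v : SpinW m) (a : SpinDelta m) : Gop m (Xop m v a) = -Xop m v (Gop m a) := by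
  change CliffordAlgebra.involute (ExteriorAlgebra.ι ℂ v * a) = -(_ * CliffordAlgebra.involute a)
  rw [map_mul, CliffordAlgebra.involute_ι, neg_mul]

theorem Gop_one : Gop m 1 = 1 :=
  map_one (CliffordAlgebra.involute (Q := (0 : QuadraticForm ℂ (SpinW m))))

theorem Dop_one (lam : Module.Dual ℂ (SpinW m)) : Dop m lam 1 = 0 :=
  CliffordAlgebra.contractLeft_one (Q := (0 : QuadraticForm ℂ (SpinW m))) lam

theorem Dop_Xop (lam : Module.Dual ℂ (SpinW m)) (v : SpinW m) (a : SpinDelta m) :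
    Dop m lam (Xop m v a) = lam v • a - Xop m v (Dop m lam a) :=
  CliffordAlgebra.contractLeft_ι_mul (d := lam) v a

theorem Dop_Gop (lam : Module.Dual ℂ (SpinW m)) (a : SpinDelta m) :
    Dop m lam (Gop m a) = -Gop m (Dop m lam a) :=
  contractLeft_involute lam a

theorem Amap_eV (v w : SpinW m) : Amap m v w (eV m) = 0 := by
  simp [Amap, eV, pD]

theorem Hmap_eV (v : SpinW m) (lam : Module.Dual ℂ (SpinW m)) : Hmap m v lam (eV m) = 0 := by
  simp [Hmap, eV, pD, pW]

theorem Emap_eV (lam mu : Module.Dual ℂ (SpinW m)) : Emap m lam mu (eV m) = 0 := by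
  simp [Emap, eV, pW]

theorem Cmap_eV (v : SpinW m) : Cmap m v (eV m) = iW m v := by
  simp [Cmap, eV, pD, pC]

theorem Bmap_eV (lam : Module.Dual ℂ (SpinW m)) : Bmap m lam (eV m) = -iD m lam := by
  simp [Bmap, eV, pW, pC]

theorem Cmap_iD (v : SpinW m) (lam : Module.Dual ℂ (SpinW m)) :
    Cmap m v (iD m lam) = -lam v • eV m := by
  simp [Cmap, eV, pD, pC, iC, iD, evalW]

theorem piMap_iW_tmul (v : SpinW m) (a : SpinDelta m) :
    piMap m (iW m v ⊗ₜ a) = (Real.sqrt 2 : ℂ) • Xop m v a := by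
  simp [piMap, piB, iW, pW, pD, pC, Xop]

theorem piMap_iD_tmul (lam : Module.Dual ℂ (SpinW m)) (a : SpinDelta m) :
    piMap m (iD m lam ⊗ₜ a) = (Real.sqrt 2 : ℂ) • Dop m lam a := by
  simp [piMap, piB, iD, pW, pD, pC, Dop]

theorem piMap_eV_tmul (a : SpinDelta m) : piMap m (eV m ⊗ₜ a) = Gop m a := by
  simp [piMap, piB, eV, pW, pD, pC]

theorem spinV_tensor_hom_ext {N : Type*} [AddCommGroup N] [Module ℂ N]
    {F G : SpinV m ⊗[ℂ] SpinDelta m →ₗ[ℂ] N}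
    (hW : ∀ v a, F (iW m v ⊗ₜ a) = G (iW m v ⊗ₜ a))
    (hD : ∀ lam a, F (iD m lam ⊗ₜ a) = G (iD m lam ⊗ₜ a))
    (he : ∀ a, F (eV m ⊗ₜ a) = G (eV m ⊗ₜ a)) : F = G := by
  refine TensorProduct.ext' ?_
  rintro ⟨v, lam, c⟩ a
  have hx : ((v, lam, c) : SpinV m) = iW m v + iD m lam + c • eV m := by
    simp [iW, iD, eV]
  simp only [hx, add_tmul, ← smul_tmul', map_add, map_smul, hW, hD, he]

variable {F : SpinV m ⊗[ℂ] SpinDelta m →ₗ[ℂ] SpinDelta m}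

theorem commutesWithEvenClifford_comp_mk_eV
    (hA : ∀ (v w : SpinW m) (x : SpinV m) (a : SpinDelta m),
      F ((Amap m v w x) ⊗ₜ a) + F (x ⊗ₜ (Xop m v (Xop m w a)))
        = Xop m v (Xop m w (F (x ⊗ₜ a))))
    (hH : ∀ (v : SpinW m) (lam : Module.Dual ℂ (SpinW m)) (x : SpinV m) (a : SpinDelta m),
      F ((Hmap m v lam x) ⊗ₜ a)
          + F (x ⊗ₜ (Xop m v (Dop m lam a) - ((1 / 2 : ℂ) * lam v) • a))
        = Xop m v (Dop m lam (F (x ⊗ₜ a))) - ((1 / 2 : ℂ) * lam v) • F (x ⊗ₜ a))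
    (hE : ∀ (lam mu : Module.Dual ℂ (SpinW m)) (x : SpinV m) (a : SpinDelta m),
      F ((Emap m lam mu x) ⊗ₜ a) + F (x ⊗ₜ (Dop m lam (Dop m mu a)))
        = Dop m lam (Dop m mu (F (x ⊗ₜ a)))) :
    CommutesWithEvenClifford (F ∘ₗ TensorProduct.mk ℂ (SpinV m) (SpinDelta m) (eV m)) where
  map_ι_mul_ι_mul v w a := by
    have h := hA v w (eV m) a
    rwa [Amap_eV, zero_tmul, map_zero, zero_add] at h
  map_ι_mul_contractLeft v lam a := by
    have h := hH v lam (eV m) a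
    rwa [Hmap_eV, zero_tmul, map_zero, zero_add, tmul_sub, map_sub, tmul_smul, map_smul,
      sub_left_inj] at h
  map_contractLeft_contractLeft lam mu a := by
    have h := hE lam mu (eV m) a
    rwa [Emap_eV, zero_tmul, map_zero, zero_add] at h

theorem two_mul_inv_sqrt_two : 2 * (Real.sqrt 2 : ℂ)⁻¹ = Real.sqrt 2 := by
  rw [← div_eq_mul_inv]
  exact_mod_cast Real.div_sqrt (x := 2)

variable {p q : ℂ}

theorem map_iW_tmul_eq_smul_piMap (he : ∀ a, F (eV m ⊗ₜ a) = p • a + q • Gop m a)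
    (hC : ∀ (v : SpinW m) (x : SpinV m) (a : SpinDelta m),
      F ((Cmap m v x) ⊗ₜ a) + ((Real.sqrt 2 : ℂ))⁻¹ • F (x ⊗ₜ (Xop m v (Gop m a)))
        = ((Real.sqrt 2 : ℂ))⁻¹ • Xop m v (Gop m (F (x ⊗ₜ a))))
    (v : SpinW m) (a : SpinDelta m) :
    F (iW m v ⊗ₜ a) = q • piMap m (iW m v ⊗ₜ a) := by
  have h := hC v (eV m) a
  rw [Cmap_eV, he, he] at h
  calc F (iW m v ⊗ₜ a) = (q * (2 * (Real.sqrt 2 : ℂ)⁻¹)) • Xop m v a := by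
        rw [eq_sub_of_add_eq h]
        simp only [map_add, map_smul, Gop_Xop, Gop_Gop]
        module
    _ = q • piMap m (iW m v ⊗ₜ a) := by rw [two_mul_inv_sqrt_two, mul_smul, piMap_iW_tmul]

theorem map_iD_tmul_eq_smul_piMap (he : ∀ a, F (eV m ⊗ₜ a) = p • a + q • Gop m a)
    (hB : ∀ (lam : Module.Dual ℂ (SpinW m)) (x : SpinV m) (a : SpinDelta m),
      F ((Bmap m lam x) ⊗ₜ a) + ((Real.sqrt 2 : ℂ))⁻¹ • F (x ⊗ₜ (Gop m (Dop m lam a)))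
        = ((Real.sqrt 2 : ℂ))⁻¹ • Gop m (Dop m lam (F (x ⊗ₜ a))))
    (lam : Module.Dual ℂ (SpinW m)) (a : SpinDelta m) :
    F (iD m lam ⊗ₜ a) = q • piMap m (iD m lam ⊗ₜ a) := by
  have h := hB lam (eV m) a
  rw [Bmap_eV, neg_tmul, map_neg, he, he, neg_add_eq_iff_eq_add, ← sub_eq_iff_eq_add] at h
  calc F (iD m lam ⊗ₜ a) = (q * (2 * (Real.sqrt 2 : ℂ)⁻¹)) • Dop m lam a := by
        rw [← h]
        simp only [map_add, map_smul, Dop_Gop, Gop_Gop, map_neg]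
        module
    _ = q • piMap m (iD m lam ⊗ₜ a) := by rw [two_mul_inv_sqrt_two, mul_smul, piMap_iD_tmul]

theorem id_coeff_eq_zero (hm : 1 ≤ m) (he : ∀ a, F (eV m ⊗ₜ a) = p • a + q • Gop m a)
    (hD : ∀ lam a, F (iD m lam ⊗ₜ a) = q • piMap m (iD m lam ⊗ₜ a))
    (hC : ∀ (v : SpinW m) (x : SpinV m) (a : SpinDelta m),
      F ((Cmap m v x) ⊗ₜ a) + ((Real.sqrt 2 : ℂ))⁻¹ • F (x ⊗ₜ (Xop m v (Gop m a)))
        = ((Real.sqrt 2 : ℂ))⁻¹ • Xop m v (Gop m (F (x ⊗ₜ a)))) :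
    p = 0 := by
  let i : Fin m := ⟨0, hm⟩
  have hdual : wD m i (wB m i) = 1 := by simp [wD, wB]
  have hDX : Dop m (wD m i) (Xop m (wB m i) 1) = 1 := by
    rw [Dop_Xop, Dop_one, map_zero, sub_zero, hdual, one_smul]
  have hsqrt : (Real.sqrt 2 : ℂ) ≠ 0 := by simp
  have hCone := hC (wB m i) (iD m (wD m i)) 1
  have hone : -(p + q) • (1 : SpinDelta m) + q • (1 : SpinDelta m) = 0 := by
    simpa only [Cmap_iD, hdual, neg_smul, one_smul, neg_tmul, map_neg, he, hD, piMap_iD_tmul,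
      Gop_one, hDX, Dop_one, smul_zero, map_zero, smul_comm _ q, inv_smul_smul₀ hsqrt,
      ← add_smul] using hCone
  have hp : p • (1 : SpinDelta m) = 0 := by
    rw [← neg_eq_zero, ← hone]
    module
  exact (smul_eq_zero.1 hp).resolve_right one_ne_zero

end SpinProjection

/-- Uniqueness of the spin projection up to scalar: any ℂ-linear map `F : V ⊗ Δ → Δ`
satisfying the five intertwining relations for the generators of `𝔰𝔬(2m+1)` is a scalar
multiple of `π`. -/
theorem spin_projection_unique (m : ℕ) (hm : 1 ≤ m)
    (F : SpinV m ⊗[ℂ] SpinDelta m →ₗ[ℂ] SpinDelta m)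
    (hi : ∀ (v w : SpinW m) (x : SpinV m) (a : SpinDelta m),
      F ((Amap m v w x) ⊗ₜ a) + F (x ⊗ₜ (Xop m v (Xop m w a)))
        = Xop m v (Xop m w (F (x ⊗ₜ a))))
    (hii : ∀ (v : SpinW m) (x : SpinV m) (a : SpinDelta m),
      F ((Cmap m v x) ⊗ₜ a) + ((Real.sqrt 2 : ℂ))⁻¹ • F (x ⊗ₜ (Xop m v (Gop m a)))
        = ((Real.sqrt 2 : ℂ))⁻¹ • Xop m v (Gop m (F (x ⊗ₜ a))))
    (hiii : ∀ (v : SpinW m) (lam : Module.Dual ℂ (SpinW m)) (x : SpinV m) (a : SpinDelta m),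
      F ((Hmap m v lam x) ⊗ₜ a)
          + F (x ⊗ₜ (Xop m v (Dop m lam a) - ((1 / 2 : ℂ) * lam v) • a))
        = Xop m v (Dop m lam (F (x ⊗ₜ a))) - ((1 / 2 : ℂ) * lam v) • F (x ⊗ₜ a))
    (hiv : ∀ (lam : Module.Dual ℂ (SpinW m)) (x : SpinV m) (a : SpinDelta m),
      F ((Bmap m lam x) ⊗ₜ a) + ((Real.sqrt 2 : ℂ))⁻¹ • F (x ⊗ₜ (Gop m (Dop m lam a)))
        = ((Real.sqrt 2 : ℂ))⁻¹ • Gop m (Dop m lam (F (x ⊗ₜ a))))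
    (hv : ∀ (lam mu : Module.Dual ℂ (SpinW m)) (x : SpinV m) (a : SpinDelta m),
      F ((Emap m lam mu x) ⊗ₜ a) + F (x ⊗ₜ (Dop m lam (Dop m mu a)))
        = Dop m lam (Dop m mu (F (x ⊗ₜ a)))) :
    ∃ c : ℂ, F = c • piMap m := by
  obtain ⟨p, q, hS⟩ :=
    (commutesWithEvenClifford_comp_mk_eV hi hiii hv).exists_eq_smul_id_add_smul_involute
  have he : ∀ a, F (eV m ⊗ₜ a) = p • a + q • Gop m a := LinearMap.congr_fun hS
  have hW := map_iW_tmul_eq_smul_piMap he hii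
  have hD := map_iD_tmul_eq_smul_piMap he hiv
  have hp : p = 0 := id_coeff_eq_zero hm he hD hii
  refine ⟨q, spinV_tensor_hom_ext hW hD fun a => ?_⟩
  rw [he, hp, zero_smul, zero_add, LinearMap.smul_apply, piMap_eV_tmul]
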